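/- arXiv:1801.07196 — 4 statements merged into one kernel-verified Lean document; each statement's English description precedes it below -/
import Mathlib

section
/- Let γ : I → ℝ² be a three times continuously differentiable unit-speed curve on an open interval I satisfying ⟨γ(s), γ''(s)⟩ = -1 for all s ∈ I, and let κ(s) = det(γ'(s), γ''(s)) denote its signed curvature. Then κ(s) ≠ 0 for every s ∈ I, and ⟨γ'(s), γ(s)⟩ = -κ'(s)/κ(s)³ for all s ∈ I. -/
/-!
Write `T = γ'`, let `ω` be the area form, so that `κ = ω(T, γ'')`, and let `⟨γ, γ''⟩ = c`. As `T` is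
a unit vector, `⟨x, y⟩ = ⟨T, x⟩⟨T, y⟩ + ω(T, x) ω(T, y)` for all `x` and `y`. Since `⟨T, γ''⟩ = 0`,
the choice `y = γ''` yields `κ ω(T, γ) = c`, so `κ ≠ 0` when `c ≠ 0`, and `κ² = ‖γ''‖²`.
Differentiating `⟨γ, γ''⟩ = c` gives `⟨γ, γ'''⟩ = 0`, while `⟨T, γ'''⟩ = -κ²` and `ω(T, γ''') = κ'`.
Hence `x = γ`, `y = γ'''` yields `κ² ⟨T, γ⟩ = ω(T, γ) κ'`, and multiplying by `κ` gives
`κ³ ⟨T, γ⟩ = c κ'`.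
-/

open scoped RealInnerProductSpace

open scoped EuclideanSpace Topology

section InnerProductSpace

variable {E : Type*} [NormedAddCommGroup E] [InnerProductSpace ℝ E] {f g : ℝ → E} {s c : ℝ}

lemma inner_deriv_right_eq_neg_of_eventually_inner_eq_const (hf : DifferentiableAt ℝ f s)
    (hg : DifferentiableAt ℝ g s) (hfg : ∀ᶠ t in 𝓝 s, ⟪f t, g t⟫ = c) :
    ⟪f s, deriv g s⟫ = -⟪deriv f s, g s⟫ := by
  have hconst : (fun t => ⟪f t, g t⟫) =ᶠ[𝓝 s] fun _ => c := hfg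
  rw [eq_neg_iff_add_eq_zero, ← deriv_inner_apply ℝ hf hg, hconst.deriv_eq, deriv_const]

lemma inner_deriv_eq_zero_of_eventually_norm_eq_const (hf : DifferentiableAt ℝ f s)
    (hnorm : ∀ᶠ t in 𝓝 s, ‖f t‖ = c) : ⟪f s, deriv f s⟫ = 0 := by
  have hinner : ∀ᶠ t in 𝓝 s, ⟪f t, f t⟫ = c ^ 2 :=
    hnorm.mono fun t ht => by rw [real_inner_self_eq_norm_sq, ht]
  rw [← self_eq_neg]
  nth_rw 2 [real_inner_comm]
  exact inner_deriv_right_eq_neg_of_eventually_inner_eq_const hf hf hinner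

lemma inner_deriv_deriv_eq_neg_norm_deriv_sq (hf : ∀ᶠ t in 𝓝 s, DifferentiableAt ℝ f t)
    (hf' : DifferentiableAt ℝ (deriv f) s) (hnorm : ∀ᶠ t in 𝓝 s, ‖f t‖ = c) :
    ⟪f s, deriv (deriv f) s⟫ = -‖deriv f s‖ ^ 2 := by
  have horth : ∀ᶠ t in 𝓝 s, ⟪f t, deriv f t⟫ = 0 := by
    filter_upwards [hf, hnorm.eventually_nhds] with t hft hnt
    exact inner_deriv_eq_zero_of_eventually_norm_eq_const hft hnt
  rw [inner_deriv_right_eq_neg_of_eventually_inner_eq_const hf.self_of_nhds hf' horth,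
    real_inner_self_eq_norm_sq]

end InnerProductSpace

section OrientedPlane

variable {E : Type*} [NormedAddCommGroup E] [InnerProductSpace ℝ E]
  [Fact (Module.finrank ℝ E = 2)] (o : Orientation ℝ E (Fin 2)) {γ : ℝ → E} {s c : ℝ}

/-- The signed curvature `ω(γ', γ'')` of a curve `γ` in an oriented plane with area form `ω`. This
is the curvature in the unit speed parametrization: there is no normalization by `‖γ'‖ ^ 3`. -/
noncomputable def signedCurvature (γ : ℝ → E) (s : ℝ) : ℝ :=
  o.areaForm (deriv γ s) (deriv (deriv γ) s)

lemma deriv_signedCurvature (hγ' : DifferentiableAt ℝ (deriv γ) s)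
    (hγ'' : DifferentiableAt ℝ (deriv (deriv γ)) s) :
    deriv (signedCurvature o γ) s = o.areaForm (deriv γ s) (deriv (deriv (deriv γ)) s) := by
  have h := o.areaForm'.hasDerivAt_of_bilinear (fun _ => hγ'.hasDerivAt) fun _ => hγ''.hasDerivAt
  simpa [Orientation.areaForm'_apply] using! h.deriv

lemma areaForm_mul_signedCurvature (hγ' : DifferentiableAt ℝ (deriv γ) s)
    (hunit : ∀ᶠ t in 𝓝 s, ‖deriv γ t‖ = 1) (x : E) :
    o.areaForm (deriv γ s) x * signedCurvature o γ s = ⟪x, deriv (deriv γ) s⟫ := by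
  have horth := inner_deriv_eq_zero_of_eventually_norm_eq_const hγ' hunit
  simpa [signedCurvature, horth, hunit.self_of_nhds] using
    o.inner_mul_inner_add_areaForm_mul_areaForm (deriv γ s) x (deriv (deriv γ) s)

lemma signedCurvature_sq (hγ' : DifferentiableAt ℝ (deriv γ) s)
    (hunit : ∀ᶠ t in 𝓝 s, ‖deriv γ t‖ = 1) :
    signedCurvature o γ s ^ 2 = ‖deriv (deriv γ) s‖ ^ 2 := by
  rw [← real_inner_self_eq_norm_sq, ← areaForm_mul_signedCurvature o hγ' hunit, sq,
    signedCurvature]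

lemma signedCurvature_pow_three_mul_inner (hγ : ContDiffAt ℝ 3 γ s)
    (hunit : ∀ᶠ t in 𝓝 s, ‖deriv γ t‖ = 1)
    (hinc : ∀ᶠ t in 𝓝 s, ⟪γ t, deriv (deriv γ) t⟫ = c) :
    signedCurvature o γ s ^ 3 * ⟪deriv γ s, γ s⟫ = c * deriv (signedCurvature o γ) s := by
  have hγ' : ContDiffAt ℝ 2 (deriv γ) s := hγ.derivWithin (by norm_num)
  have hγ'' : ContDiffAt ℝ 1 (deriv (deriv γ)) s := hγ'.derivWithin (by norm_num)
  have hd' : ∀ᶠ t in 𝓝 s, DifferentiableAt ℝ (deriv γ) t :=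
    (hγ'.eventually (by simp)).mono fun t ht => ht.differentiableAt (by simp)
  have hd'' : DifferentiableAt ℝ (deriv (deriv γ)) s := hγ''.differentiableAt (by simp)
  have hposition : ⟪γ s, deriv (deriv (deriv γ)) s⟫ = 0 := by
    rw [inner_deriv_right_eq_neg_of_eventually_inner_eq_const (hγ.differentiableAt (by simp))
      hd'' hinc, inner_deriv_eq_zero_of_eventually_norm_eq_const hd'.self_of_nhds hunit, neg_zero]
  have htangent : ⟪deriv γ s, deriv (deriv (deriv γ)) s⟫ = -signedCurvature o γ s ^ 2 := by
    rw [signedCurvature_sq o hd'.self_of_nhds hunit,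
      inner_deriv_deriv_eq_neg_norm_deriv_sq hd' hd'' hunit]
  have hnormal : o.areaForm (deriv γ s) (γ s) * signedCurvature o γ s = c := by
    rw [areaForm_mul_signedCurvature o hd'.self_of_nhds hunit, hinc.self_of_nhds]
  have hframe := o.inner_mul_inner_add_areaForm_mul_areaForm
    (deriv γ s) (γ s) (deriv (deriv (deriv γ)) s)
  rw [htangent, ← deriv_signedCurvature o hd'.self_of_nhds hd'', hposition, mul_zero] at hframe
  linear_combination -signedCurvature o γ s * hframe + deriv (signedCurvature o γ) s * hnormal

theorem stmt4_general (hγ : ContDiffAt ℝ 3 γ s) (hunit : ∀ᶠ t in 𝓝 s, ‖deriv γ t‖ = 1)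
    (hinc : ∀ᶠ t in 𝓝 s, ⟪γ t, deriv (deriv γ) t⟫ = c) (hc : c ≠ 0) :
    signedCurvature o γ s ≠ 0 ∧
      ⟪deriv γ s, γ s⟫ = c * deriv (signedCurvature o γ) s / signedCurvature o γ s ^ 3 := by
  have hγ' : ContDiffAt ℝ 2 (deriv γ) s := hγ.derivWithin (by norm_num)
  have hcurv : signedCurvature o γ s ≠ 0 := by
    refine right_ne_zero_of_mul (a := o.areaForm (deriv γ s) (γ s)) ?_
    rwa [areaForm_mul_signedCurvature o (hγ'.differentiableAt (by simp)) hunit, hinc.self_of_nhds]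
  refine ⟨hcurv, ?_⟩
  rw [eq_div_iff (pow_ne_zero 3 hcurv), mul_comm]
  exact signedCurvature_pow_three_mul_inner o hγ hunit hinc

end OrientedPlane

lemma areaForm_basisFun_orientation (x y : EuclideanSpace ℝ (Fin 2)) :
    (EuclideanSpace.basisFun (Fin 2) ℝ).toBasis.orientation.areaForm x y =
      Matrix.det !![x 0, y 0; x 1, y 1] := by
  rw [Orientation.areaForm_to_volumeForm,
    Orientation.volumeForm_robust _ (EuclideanSpace.basisFun (Fin 2) ℝ) rfl,
    Module.Basis.det_apply]
  congr 1
  ext i j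
  fin_cases i <;> fin_cases j <;> simp [Module.Basis.toMatrix_apply]

/-- For a C³ unit-speed planar curve `γ` on an open interval `I` with `⟨γ, γ''⟩ ≡ -1`,
the signed curvature `κ = det(γ', γ'')` is nowhere zero on `I` and
`⟨γ'(s), γ(s)⟩ = -κ'(s)/κ(s)³` on `I`. -/
theorem stmt4 (I : Set ℝ) (hI : IsOpen I) (hI' : I.OrdConnected)
    (γ : ℝ → EuclideanSpace ℝ (Fin 2)) (hγ : ContDiffOn ℝ 3 γ I)
    (hunit : ∀ s ∈ I, ‖deriv γ s‖ = 1)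
    (hinc : ∀ s ∈ I, ⟪γ s, deriv (deriv γ) s⟫ = -1)
    (κ : ℝ → ℝ)
    (hκ : ∀ s : ℝ, κ s =
      Matrix.det !![deriv γ s 0, deriv (deriv γ) s 0;
                    deriv γ s 1, deriv (deriv γ) s 1]) :
    ∀ s ∈ I, κ s ≠ 0 ∧ ⟪deriv γ s, γ s⟫ = -(deriv κ s / κ s ^ 3) := by
  intro s hs
  have hmem : I ∈ 𝓝 s := hI.mem_nhds hs
  obtain rfl : κ = signedCurvature (EuclideanSpace.basisFun (Fin 2) ℝ).toBasis.orientation γ :=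
    funext fun t => (hκ t).trans (areaForm_basisFun_orientation _ _).symm
  simpa [neg_div] using stmt4_general _ (hγ.contDiffAt hmem)
    (Filter.eventually_of_mem hmem hunit) (Filter.eventually_of_mem hmem hinc)
    (neg_ne_zero.mpr one_ne_zero)
end

section
/- Let n ≥ 2 be an integer and let κ : I → ℝ be a twice continuously differentiable, everywhere positive function on an open interval I satisfying n (κ(s) κ''(s) - 3 κ'(s)²) = (n-1) κ(s)⁴ for all s ∈ I. Then there exist a real number a and c > 0 such that s - a ∈ (-c, c) and κ(s) = √n / (√(n-1) · √(c² - (s - a)²)) for all s ∈ I. -/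
/-!
The substitution `u = κ⁻²` linearises the equation `κκ'' - 3κ'² = mκ⁴`: one has `u' = -2κ'/κ³`, and
then `u'' = -2(κκ'' - 3κ'²)/κ⁴ = -2m`. So `u` is a quadratic polynomial with leading coefficient
`-m`; being positive somewhere, it is `m(c² - (s-a)²)` for some `c > 0`.
-/

section ConvexSet

variable {𝕜 F : Type*} [RCLike 𝕜] [NormedAddCommGroup F] [NormedSpace 𝕜 F]
  {f f' : 𝕜 → F} {s : Set 𝕜} {x₀ : 𝕜}

theorem eqOn_of_hasDerivWithinAt_eq {g : 𝕜 → F} (hs : Convex ℝ s)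
    (hf : ∀ x ∈ s, HasDerivWithinAt f (f' x) s x) (hg : ∀ x ∈ s, HasDerivWithinAt g (f' x) s x)
    (hx₀ : x₀ ∈ s) (h₀ : f x₀ = g x₀) : Set.EqOn f g s := by
  intro x hx
  have hconst : ‖(f - g) x - (f - g) x₀‖ ≤ 0 * ‖x - x₀‖ :=
    hs.norm_image_sub_le_of_norm_hasDerivWithin_le (fun y hy => (hf y hy).sub (hg y hy))
      (fun y _ => by simp) hx₀ hx
  simpa [h₀, sub_eq_zero] using hconst

theorem eqOn_quadratic_of_hasDerivWithinAt_const {b : F} (hs : Convex ℝ s)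
    (hf : ∀ x ∈ s, HasDerivWithinAt f (f' x) s x) (hf' : ∀ x ∈ s, HasDerivWithinAt f' b s x)
    (hx₀ : x₀ ∈ s) :
    Set.EqOn f (fun x => f x₀ + (x - x₀) • f' x₀ + ((x - x₀) ^ 2 / 2) • b) s := by
  have hsub : ∀ x, HasDerivWithinAt (fun t => t - x₀) 1 s x := fun x =>
    (hasDerivWithinAt_id x s).sub_const x₀
  have hf'_affine : Set.EqOn f' (fun x => f' x₀ + (x - x₀) • b) s :=
    eqOn_of_hasDerivWithinAt_eq hs hf'
      (fun x _ => (((hsub x).smul_const b).const_add (f' x₀)).congr_deriv (one_smul 𝕜 b))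
      hx₀ (by simp)
  refine eqOn_of_hasDerivWithinAt_eq hs hf (fun x hx => ?_) hx₀ (by simp)
  rw [hf'_affine hx]
  have hsq : HasDerivWithinAt (fun t => (t - x₀) ^ 2 / 2) (x - x₀) s x :=
    (((hsub x).fun_pow 2).div_const 2).congr_deriv (by simp)
  exact ((((hsub x).smul_const (f' x₀)).const_add (f x₀)).add
    (hsq.smul_const b)).congr_deriv (by rw [one_smul])

end ConvexSet

section Deriv

theorem hasDerivWithinAt_deriv_of_contDiffOn {𝕜 F : Type*} [NontriviallyNormedField 𝕜]
    [NormedAddCommGroup F] [NormedSpace 𝕜 F] {f : 𝕜 → F} {s : Set 𝕜} {k : WithTop ℕ∞}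
    (hs : IsOpen s) (hf : ContDiffOn 𝕜 k f s) (hk : k ≠ 0) {x : 𝕜} (hx : x ∈ s) :
    HasDerivWithinAt f (deriv f x) s x :=
  ((hf.differentiableOn hk).hasDerivAt (hs.mem_nhds hx)).hasDerivWithinAt

variable {𝕜 : Type*} [NontriviallyNormedField 𝕜] {f f' : 𝕜 → 𝕜} {s : Set 𝕜} {x : 𝕜}

theorem hasDerivWithinAt_inv_sq {d : 𝕜} (hf : HasDerivWithinAt f d s x) (hx : f x ≠ 0) :
    HasDerivWithinAt (fun t => (f t ^ 2)⁻¹) (-2 * d / f x ^ 3) s x := by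
  refine ((hf.fun_pow 2).fun_inv (pow_ne_zero 2 hx)).congr_deriv ?_
  field_simp
  norm_num
  ring

theorem hasDerivWithinAt_deriv_inv_sq {d : 𝕜} (hf : HasDerivWithinAt f (f' x) s x)
    (hf' : HasDerivWithinAt f' d s x) (hx : f x ≠ 0) :
    HasDerivWithinAt (fun t => -2 * f' t / f t ^ 3)
      (-2 * (f x * d - 3 * f' x ^ 2) / f x ^ 4) s x := by
  refine ((hf'.const_mul (-2)).fun_div (hf.fun_pow 3) (pow_ne_zero 3 hx)).congr_deriv ?_
  field_simp
  norm_num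
  ring

end Deriv

theorem exists_quadratic_eq_mul_sq_sub_sq {α m : ℝ} (hα : 0 < α) (hm : 0 < m) (β s₀ : ℝ) :
    ∃ a c : ℝ, 0 < c ∧
      ∀ s, α + (s - s₀) * β - m * (s - s₀) ^ 2 = m * (c ^ 2 - (s - a) ^ 2) := by
  refine ⟨s₀ + β / (2 * m), √(α / m + (β / (2 * m)) ^ 2), by positivity, fun s => ?_⟩
  rw [Real.sq_sqrt (by positivity)]
  field_simp
  ring

theorem eq_sqrt_div_of_inv_sq_eq {k p q w : ℝ} (hk : 0 ≤ k) (hp : 0 ≤ p) (hq : 0 ≤ q)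
    (h : (k ^ 2)⁻¹ = q / p * w) : k = √p / (√q * √w) := by
  have hk2 : k ^ 2 = p / (q * w) := by
    rw [← inv_inv (k ^ 2), h, div_mul_eq_mul_div, inv_div]
  rw [← Real.sqrt_mul hq, ← Real.sqrt_div hp, ← hk2, Real.sqrt_sq hk]

theorem exists_inv_sq_eq_mul_sq_sub_sq {κ κ' κ'' : ℝ → ℝ} {m : ℝ} (hm : 0 < m) {I : Set ℝ}
    (hI : Convex ℝ I) (hκ : ∀ s ∈ I, HasDerivWithinAt κ (κ' s) I s)
    (hκ' : ∀ s ∈ I, HasDerivWithinAt κ' (κ'' s) I s) (hne : ∀ s ∈ I, κ s ≠ 0)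
    (hode : ∀ s ∈ I, κ s * κ'' s - 3 * κ' s ^ 2 = m * κ s ^ 4) :
    ∃ a c : ℝ, 0 < c ∧ ∀ s ∈ I, (κ s ^ 2)⁻¹ = m * (c ^ 2 - (s - a) ^ 2) := by
  rcases I.eq_empty_or_nonempty with rfl | ⟨s₀, hs₀⟩
  · exact ⟨0, 1, one_pos, by simp⟩
  have hu : ∀ s ∈ I, HasDerivWithinAt (fun t => (κ t ^ 2)⁻¹) (-2 * κ' s / κ s ^ 3) I s :=
    fun s hs => hasDerivWithinAt_inv_sq (hκ s hs) (hne s hs)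
  have hu' : ∀ s ∈ I, HasDerivWithinAt (fun t => -2 * κ' t / κ t ^ 3) (-2 * m) I s := by
    intro s hs
    have hs_ne := hne s hs
    refine (hasDerivWithinAt_deriv_inv_sq (hκ s hs) (hκ' s hs) hs_ne).congr_deriv ?_
    rw [hode s hs]
    field_simp
  have hquad := eqOn_quadratic_of_hasDerivWithinAt_const hI hu hu' hs₀
  have hpos₀ : 0 < (κ s₀ ^ 2)⁻¹ := inv_pos.2 (sq_pos_of_ne_zero (hne s₀ hs₀))
  obtain ⟨a, c, hc, hac⟩ := exists_quadratic_eq_mul_sq_sub_sq hpos₀ hm (-2 * κ' s₀ / κ s₀ ^ 3) s₀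
  refine ⟨a, c, hc, fun s hs => ?_⟩
  have hs_eq := hquad hs
  simp only [smul_eq_mul] at hs_eq
  rw [← hac s, hs_eq]
  ring

theorem stmt11_general {p q : ℝ} (hp : 0 < p) (hq : 0 < q) {I : Set ℝ} (hI : I.OrdConnected)
    {κ κ' κ'' : ℝ → ℝ} (hκ : ∀ s ∈ I, HasDerivWithinAt κ (κ' s) I s)
    (hκ' : ∀ s ∈ I, HasDerivWithinAt κ' (κ'' s) I s) (hpos : ∀ s ∈ I, 0 < κ s)
    (hode : ∀ s ∈ I, p * (κ s * κ'' s - 3 * κ' s ^ 2) = q * κ s ^ 4) :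
    ∃ a c : ℝ, 0 < c ∧ ∀ s ∈ I, s - a ∈ Set.Ioo (-c) c ∧
      κ s = √p / (√q * √(c ^ 2 - (s - a) ^ 2)) := by
  have hm : 0 < q / p := div_pos hq hp
  have hode' : ∀ s ∈ I, κ s * κ'' s - 3 * κ' s ^ 2 = q / p * κ s ^ 4 := fun s hs => by
    rw [div_mul_eq_mul_div, eq_div_iff hp.ne', mul_comm, hode s hs]
  obtain ⟨a, c, hc, hu⟩ := exists_inv_sq_eq_mul_sq_sub_sq hm hI.convex hκ hκ'
    (fun s hs => (hpos s hs).ne') hode'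
  refine ⟨a, c, hc, fun s hs =>
    ⟨?_, eq_sqrt_div_of_inv_sq_eq (hpos s hs).le hp.le hq.le (hu s hs)⟩⟩
  have hw : 0 < c ^ 2 - (s - a) ^ 2 :=
    pos_of_mul_pos_right (hu s hs ▸ inv_pos.2 (pow_pos (hpos s hs) 2)) hm.le
  exact abs_lt_of_sq_lt_sq' (sub_pos.1 hw) hc.le

/-- Every twice continuously differentiable, everywhere positive solution `κ` of the
ODE `n(κκ'' - 3κ'²) = (n-1)κ⁴` (`n ≥ 2`) on an open interval `I` has the form
`κ(s) = √n/(√(n-1)·√(c² - (s-a)²))` for some real `a` and some `c > 0`. -/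
theorem stmt11 (n : ℕ) (hn : 2 ≤ n) (I : Set ℝ) (hI : IsOpen I) (hI' : I.OrdConnected)
    (κ : ℝ → ℝ) (hκ : ContDiffOn ℝ 2 κ I)
    (hpos : ∀ s ∈ I, 0 < κ s)
    (hode : ∀ s ∈ I,
      (n : ℝ) * (κ s * deriv (deriv κ) s - 3 * deriv κ s ^ 2) = ((n : ℝ) - 1) * κ s ^ 4) :
    ∃ a : ℝ, ∃ c : ℝ, 0 < c ∧ ∀ s ∈ I, s - a ∈ Set.Ioo (-c) c ∧
      κ s = Real.sqrt (n : ℝ) / (Real.sqrt ((n : ℝ) - 1) * Real.sqrt (c ^ 2 - (s - a) ^ 2)) :=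
  stmt11_general (by positivity) (sub_pos.2 (Nat.one_lt_cast.2 hn)) hI'
    (fun _ => hasDerivWithinAt_deriv_of_contDiffOn hI hκ two_ne_zero)
    (fun _ => hasDerivWithinAt_deriv_of_contDiffOn hI
      (hκ.deriv_of_isOpen hI one_add_one_eq_two.le) one_ne_zero) hpos hode
end

section
/- Let I ⊂ ℝ be an open interval and let r : I → ℝ be a twice differentiable positive function. For s ∈ I and t ∈ ℝ set x(s,t) = (r(s) cos t, r(s) sin t, s) ∈ ℝ³ and H(s,t) = ((1 + r'(s)² - r(s) r''(s)) / (2 r(s) (1 + r'(s)²)²)) · (-cos t, -sin t, r'(s)). Then ⟨H(s,t), x(s,t)⟩ = -1 holds for all s ∈ I and all t ∈ ℝ if and only if (1 + r'(s)²)(r(s) + s r'(s) + 2 r(s) r'(s)²) + r(s)(r(s) - s r'(s)) r''(s) = 0 for all s ∈ I. -/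
/-!
In the product `⟪H, x⟫` the angle disappears, because the rotation by `t` acts isometrically on
both the profile point `(r, 0, s)` and the profile normal `(-1, 0, r')`: their inner product is
`s r' - r` for every `t`. With a nonzero denominator, `⟪H, x⟫ = -1` is then a polynomial identity
in `s, r, r', r''`, equivalent to the differential equation at the single value `s`.
-/

open scoped RealInnerProductSpace

/-- The surface of revolution about the third axis with profile function `r`, parametrized by the
height `s` and the angle `t`; it is also the position vector of the point `(s, t)`. -/
noncomputable def surfaceOfRevolution (r : ℝ → ℝ) (s t : ℝ) : EuclideanSpace ℝ (Fin 3) :=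
  !₂[r s * Real.cos t, r s * Real.sin t, s]

namespace surfaceOfRevolution

/-- The normal field of the surface of revolution that points towards the axis where `0 < r s`.
It is not normalized: its length is `√(1 + r'²)`. -/
noncomputable def normal (r : ℝ → ℝ) (s t : ℝ) : EuclideanSpace ℝ (Fin 3) :=
  !₂[-Real.cos t, -Real.sin t, deriv r s]

/-- The mean curvature vector of the surface of revolution. The square of `1 + r'²` in the
denominator collects the factor `(1 + r'²) ^ (3 / 2)` of the scalar mean curvature and the length
of `normal`. -/
noncomputable def meanCurvatureVector (r : ℝ → ℝ) (s t : ℝ) : EuclideanSpace ℝ (Fin 3) :=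
  ((1 + deriv r s ^ 2 - r s * deriv (deriv r) s) /
      (2 * r s * (1 + deriv r s ^ 2) ^ 2)) • normal r s t

theorem inner_normal (r : ℝ → ℝ) (s t : ℝ) :
    ⟪normal r s t, surfaceOfRevolution r s t⟫ = s * deriv r s - r s := by
  calc ⟪normal r s t, surfaceOfRevolution r s t⟫
      = r s * Real.cos t * -Real.cos t + r s * Real.sin t * -Real.sin t + s * deriv r s := by
        simp [normal, surfaceOfRevolution, PiLp.inner_apply, Fin.sum_univ_three]
    _ = s * deriv r s - r s := by
        linear_combination -r s * Real.sin_sq_add_cos_sq t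

theorem inner_meanCurvatureVector (r : ℝ → ℝ) (s t : ℝ) :
    ⟪meanCurvatureVector r s t, surfaceOfRevolution r s t⟫ =
      (1 + deriv r s ^ 2 - r s * deriv (deriv r) s) * (s * deriv r s - r s) /
        (2 * r s * (1 + deriv r s ^ 2) ^ 2) := by
  rw [meanCurvatureVector, real_inner_smul_left, inner_normal, div_mul_eq_mul_div]

end surfaceOfRevolution

theorem stmt12_general {r : ℝ → ℝ} {s p q : ℝ} (hr : r s ≠ 0) (hp : HasDerivAt r p s)
    (hq : HasDerivAt (deriv r) q s) (t : ℝ) :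
    ⟪surfaceOfRevolution.meanCurvatureVector r s t, surfaceOfRevolution r s t⟫ = -1 ↔
      (1 + p ^ 2) * (r s + s * p + 2 * r s * p ^ 2) + r s * (r s - s * p) * q = 0 := by
  have denom_ne_zero : 2 * r s * (1 + p ^ 2) ^ 2 ≠ 0 := by positivity
  have expand : (1 + p ^ 2 - r s * q) * (s * p - r s) - -1 * (2 * r s * (1 + p ^ 2) ^ 2) =
      (1 + p ^ 2) * (r s + s * p + 2 * r s * p ^ 2) + r s * (r s - s * p) * q := by ring
  rw [surfaceOfRevolution.inner_meanCurvatureVector, hp.deriv, hq.deriv, div_eq_iff denom_ne_zero,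
    ← sub_eq_zero, expand]

/-- For the surface of revolution `x(s,t) = (r(s)cos t, r(s)sin t, s)` in `ℝ³` with
mean curvature vector
`H(s,t) = ((1 + r'² - r r'')/(2r(1 + r'²)²)) (-cos t, -sin t, r')`,
one has `⟨H, x⟩ ≡ -1` if and only if
`(1 + r'²)(r + s r' + 2 r r'²) + r(r - s r') r'' = 0` on `I`. -/
theorem stmt12 (I : Set ℝ) (hI : IsOpen I) (hI' : I.OrdConnected)
    (r : ℝ → ℝ) (hpos : ∀ s ∈ I, 0 < r s)
    (hdiff : ∀ s ∈ I, DifferentiableAt ℝ r s ∧ DifferentiableAt ℝ (deriv r) s)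
    (x H : ℝ → ℝ → EuclideanSpace ℝ (Fin 3))
    (hx : ∀ s t : ℝ, x s t = ![r s * Real.cos t, r s * Real.sin t, s])
    (hH : ∀ s t : ℝ, H s t =
      ((1 + deriv r s ^ 2 - r s * deriv (deriv r) s) /
          (2 * r s * (1 + deriv r s ^ 2) ^ 2)) •
        ![-Real.cos t, -Real.sin t, deriv r s]) :
    (∀ s ∈ I, ∀ t : ℝ, ⟪H s t, x s t⟫ = -1) ↔
    (∀ s ∈ I, (1 + deriv r s ^ 2) * (r s + s * deriv r s + 2 * r s * deriv r s ^ 2)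
        + r s * (r s - s * deriv r s) * deriv (deriv r) s = 0) := by
  obtain rfl : x = surfaceOfRevolution r := funext₂ fun s t ↦ PiLp.ext (congrFun (hx s t))
  obtain rfl : H = surfaceOfRevolution.meanCurvatureVector r :=
    funext₂ fun s t ↦ PiLp.ext (congrFun (hH s t))
  exact forall₂_congr fun s hs ↦ by
    simp only [stmt12_general (hpos s hs).ne' (hdiff s hs).1.hasDerivAt (hdiff s hs).2.hasDerivAt,
      forall_const]
end

section
/- Let n ≥ 2 be an integer and c > 0, and define K : (-c, c) → ℝ by K(s) = √(n/(n-1)) · arctan(s/√(c² - s²)). Define F, G : (-c, c) → ℝ by F(s) = (1-n) s cos(K(s)) + √(n(n-1)) √(c² - s²) sin(K(s)) and G(s) = (1-n) s sin(K(s)) - √(n(n-1)) √(c² - s²) cos(K(s)). Then K'(s) = √(n/(n-1)) / √(c² - s²), F'(s) = cos(K(s)), and G'(s) = sin(K(s)) for all s ∈ (-c, c). -/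
/-- `K(s) = √(n/(n-1)) · arctan(s/√(c² - s²))`. -/
noncomputable def Kfun (n : ℕ) (c s : ℝ) : ℝ :=
  Real.sqrt ((n : ℝ) / ((n : ℝ) - 1)) * Real.arctan (s / Real.sqrt (c ^ 2 - s ^ 2))

/-- `F(s) = (1-n)s cos K(s) + √(n(n-1))√(c²-s²) sin K(s)`. -/
noncomputable def Ffun (n : ℕ) (c s : ℝ) : ℝ :=
  (1 - (n : ℝ)) * s * Real.cos (Kfun n c s) +
    Real.sqrt ((n : ℝ) * ((n : ℝ) - 1)) * Real.sqrt (c ^ 2 - s ^ 2) * Real.sin (Kfun n c s)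

/-- `G(s) = (1-n)s sin K(s) - √(n(n-1))√(c²-s²) cos K(s)`. -/
noncomputable def Gfun (n : ℕ) (c s : ℝ) : ℝ :=
  (1 - (n : ℝ)) * s * Real.sin (Kfun n c s) -
    Real.sqrt ((n : ℝ) * ((n : ℝ) - 1)) * Real.sqrt (c ^ 2 - s ^ 2) * Real.cos (Kfun n c s)

/-!
Put `r = √(c² - s²)`. Since `r' = -s/r` and `r² + s² = c²`, the function `arctan (s/r)` has
derivative `1/r`. For any angle `θ` with `θ' = a/r`,
`(p s cos θ + q r sin θ)' = (p + q a) cos θ - (p a + q) (s/r) sin θ`,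
and replacing `θ` by `θ - π/2` gives the companion formula for `p s sin θ - q r cos θ`. The choice
`a = √(n/(n-1))`, `p = 1 - n`, `q = √(n(n-1))` satisfies `p + q a = 1` and `p a + q = 0`.
-/

open Real

section Circle

variable {c s : ℝ}

theorem hasDerivAt_sqrt_sq_sub_sq (h : s ^ 2 < c ^ 2) :
    HasDerivAt (fun x => √(c ^ 2 - x ^ 2)) (-(s / √(c ^ 2 - s ^ 2))) s := by
  have hsq : HasDerivAt (fun x => c ^ 2 - x ^ 2) (-(2 * s)) s := by
    simpa using (hasDerivAt_pow 2 s).const_sub (c ^ 2)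
  refine (hsq.sqrt (sub_pos.2 h).ne').congr_deriv ?_
  rw [neg_div, mul_div_mul_left _ _ two_ne_zero]

theorem hasDerivAt_arctan_div_sqrt_sq_sub_sq (h : s ^ 2 < c ^ 2) :
    HasDerivAt (fun x => arctan (x / √(c ^ 2 - x ^ 2))) (1 / √(c ^ 2 - s ^ 2)) s := by
  have hr : 0 < √(c ^ 2 - s ^ 2) := sqrt_pos.2 (sub_pos.2 h)
  refine ((hasDerivAt_id' s).fun_div (hasDerivAt_sqrt_sq_sub_sq h) hr.ne').arctan.congr_deriv ?_
  generalize √(c ^ 2 - s ^ 2) = r at hr ⊢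
  have hrs : r ^ 2 + s ^ 2 ≠ 0 := by positivity
  field_simp
  ring

variable {θ : ℝ → ℝ} {a : ℝ}

theorem hasDerivAt_mul_cos_add_mul_sin (p q : ℝ) (h : s ^ 2 < c ^ 2)
    (hθ : HasDerivAt θ (a / √(c ^ 2 - s ^ 2)) s) :
    HasDerivAt (fun x => p * x * cos (θ x) + q * √(c ^ 2 - x ^ 2) * sin (θ x))
      ((p + q * a) * cos (θ s) - (p * a + q) * (s / √(c ^ 2 - s ^ 2)) * sin (θ s)) s := by
  have hr : √(c ^ 2 - s ^ 2) ≠ 0 := (sqrt_pos.2 (sub_pos.2 h)).ne'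
  have hcos := ((hasDerivAt_id' s).const_mul p).fun_mul hθ.cos
  have hsin := ((hasDerivAt_sqrt_sq_sub_sq h).const_mul q).fun_mul hθ.sin
  refine (hcos.fun_add hsin).congr_deriv ?_
  field_simp
  ring

theorem hasDerivAt_mul_sin_sub_mul_cos (p q : ℝ) (h : s ^ 2 < c ^ 2)
    (hθ : HasDerivAt θ (a / √(c ^ 2 - s ^ 2)) s) :
    HasDerivAt (fun x => p * x * sin (θ x) - q * √(c ^ 2 - x ^ 2) * cos (θ x))
      ((p + q * a) * sin (θ s) + (p * a + q) * (s / √(c ^ 2 - s ^ 2)) * cos (θ s)) s := by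
  simpa only [cos_sub_pi_div_two, sin_sub_pi_div_two, mul_neg, ← sub_eq_add_neg, sub_neg_eq_add]
    using hasDerivAt_mul_cos_add_mul_sin p q h (hθ.sub_const (π / 2))

end Circle

section Coefficients

variable {ν : ℝ}

theorem sqrt_mul_sub_one_mul_sqrt_div_sub_one (hν : 1 < ν) :
    √(ν * (ν - 1)) * √(ν / (ν - 1)) = ν := by
  have hν₁ : 0 < ν - 1 := sub_pos.2 hν
  calc
    √(ν * (ν - 1)) * √(ν / (ν - 1)) = √(ν * (ν - 1) * (ν / (ν - 1))) :=
      (sqrt_mul (by positivity) _).symm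
    _ = √(ν ^ 2) := by congr 1; field_simp
    _ = ν := sqrt_sq (by positivity)

theorem sub_one_mul_sqrt_div_sub_one (hν : 1 < ν) :
    (ν - 1) * √(ν / (ν - 1)) = √(ν * (ν - 1)) := by
  have hν₁ : 0 < ν - 1 := sub_pos.2 hν
  calc
    (ν - 1) * √(ν / (ν - 1)) = √((ν - 1) ^ 2 * (ν / (ν - 1))) := by
      rw [sqrt_mul (sq_nonneg _), sqrt_sq hν₁.le]
    _ = √(ν * (ν - 1)) := by congr 1; field_simp

end Coefficients

/-- The angle `K` with the dimension `n` replaced by a real parameter `ν`: the angle between the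
tangent of the generating curve at arc length `s` and the first coordinate axis. -/
noncomputable def tangentAngle (ν c s : ℝ) : ℝ :=
  √(ν / (ν - 1)) * arctan (s / √(c ^ 2 - s ^ 2))

/-- The first coordinate `F` of the generating curve, with the dimension `n` replaced by a real
parameter `ν`. -/
noncomputable def curveFst (ν c s : ℝ) : ℝ :=
  (1 - ν) * s * cos (tangentAngle ν c s) +
    √(ν * (ν - 1)) * √(c ^ 2 - s ^ 2) * sin (tangentAngle ν c s)

/-- The second coordinate `G` of the generating curve, with the dimension `n` replaced by a real
parameter `ν`. -/
noncomputable def curveSnd (ν c s : ℝ) : ℝ :=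
  (1 - ν) * s * sin (tangentAngle ν c s) -
    √(ν * (ν - 1)) * √(c ^ 2 - s ^ 2) * cos (tangentAngle ν c s)

theorem hasDerivAt_tangentAngle (ν : ℝ) {c s : ℝ} (h : s ^ 2 < c ^ 2) :
    HasDerivAt (tangentAngle ν c) (√(ν / (ν - 1)) / √(c ^ 2 - s ^ 2)) s :=
  ((hasDerivAt_arctan_div_sqrt_sq_sub_sq h).const_mul _).congr_deriv (mul_one_div _ _)

theorem stmt15_general {ν c s : ℝ} (hν : 1 < ν) (h : s ^ 2 < c ^ 2) :
    HasDerivAt (tangentAngle ν c) (√(ν / (ν - 1)) / √(c ^ 2 - s ^ 2)) s ∧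
      HasDerivAt (curveFst ν c) (cos (tangentAngle ν c s)) s ∧
      HasDerivAt (curveSnd ν c) (sin (tangentAngle ν c s)) s := by
  have hK := hasDerivAt_tangentAngle ν h
  have h_one : (1 - ν) + √(ν * (ν - 1)) * √(ν / (ν - 1)) = 1 := by
    rw [sqrt_mul_sub_one_mul_sqrt_div_sub_one hν, sub_add_cancel]
  have h_zero : (1 - ν) * √(ν / (ν - 1)) + √(ν * (ν - 1)) = 0 := by
    rw [← sub_one_mul_sqrt_div_sub_one hν]
    ring
  refine ⟨hK, ?_, ?_⟩
  · refine (hasDerivAt_mul_cos_add_mul_sin _ _ h hK).congr_deriv ?_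
    rw [h_one, h_zero, one_mul, zero_mul, zero_mul, sub_zero]
  · refine (hasDerivAt_mul_sin_sub_mul_cos _ _ h hK).congr_deriv ?_
    rw [h_one, h_zero, one_mul, zero_mul, zero_mul, add_zero]

/-- For `n ≥ 2` and `c > 0`, on `(-c, c)` one has
`K'(s) = √(n/(n-1))/√(c² - s²)`, `F'(s) = cos K(s)`, and `G'(s) = sin K(s)`. -/
theorem stmt15 (n : ℕ) (hn : 2 ≤ n) (c : ℝ) (hc : 0 < c) :
    ∀ s ∈ Set.Ioo (-c) c,
      HasDerivAt (Kfun n c)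
        (Real.sqrt ((n : ℝ) / ((n : ℝ) - 1)) / Real.sqrt (c ^ 2 - s ^ 2)) s ∧
      HasDerivAt (Ffun n c) (Real.cos (Kfun n c s)) s ∧
      HasDerivAt (Gfun n c) (Real.sin (Kfun n c s)) s :=
  fun _ hs => stmt15_general (Nat.one_lt_cast.2 hn) (sq_lt_sq' hs.1 hs.2)
end
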